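/- If a picture language R ⊆ Σ^{++} is recognized by a tiling system with local alphabet Γ', then for every k ≥ 2 the padded language R^(k) ⊆ (Σ ∪ {$})^{++} is recognized by a tiling system with a local alphabet of cardinality |Γ'| + k + 1. -/

import Mathlib

/-- A picture over alphabet `A`: a rectangular array with at least one row
and one column. -/
structure Picture (A : Type) : Type where
  rows : ℕ
  cols : ℕ
  rows_pos : 0 < rows
  cols_pos : 0 < cols
  pix : Fin rows → Fin cols → A

namespace Picture

/-- Pixelwise projection of a picture along a map of alphabets. -/
def map {A B : Type} (f : A → B) (p : Picture A) : Picture B :=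
  ⟨p.rows, p.cols, p.rows_pos, p.cols_pos, fun i j => f (p.pix i j)⟩

/-- The pixel at (i,j) (0-based), or `none` if out of range. -/
def pget {A : Type} (p : Picture A) (i j : ℕ) : Option A :=
  if h : i < p.rows ∧ j < p.cols then some (p.pix ⟨i, h.1⟩ ⟨j, h.2⟩) else none

/-- The pixel at position (i,j) of the bordered picture of `p`, where the
border symbol `#` is `none`; row 0 and column 0 are border rows, the content
occupies rows `1..p.rows` and columns `1..p.cols`, and every other position
is a border (`#`) position. -/
def bpix {A : Type} (p : Picture A) (i j : ℕ) : Option A :=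
  if h : 1 ≤ i ∧ i ≤ p.rows ∧ 1 ≤ j ∧ j ≤ p.cols then
    some (p.pix ⟨i - 1, by omega⟩ ⟨j - 1, by omega⟩)
  else none

end Picture

/-- A `k`-tile over `A ∪ {#}`, the border symbol `#` being `none`. -/
abbrev BTile (A : Type) (k : ℕ) := Fin k → Fin k → Option A

/-- Number of rows of the bordered version of `p` used for `k`-tiles:
one border row on top and at least one at the bottom, with as many extra
border rows at the bottom as needed for `k × k` subpictures to exist. -/
def borderRows {A : Type} (p : Picture A) (k : ℕ) : ℕ := max (p.rows + 2) k

/-- Number of columns of the bordered version of `p` used for `k`-tiles. -/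
def borderCols {A : Type} (p : Picture A) (k : ℕ) : ℕ := max (p.cols + 2) k

/-- The set of `k`-tiles of the bordered picture of `p`. -/
def tilesOf {A : Type} (k : ℕ) (p : Picture A) : Set (BTile A k) :=
  { t | ∃ i j : ℕ, i + k ≤ borderRows p k ∧ j + k ≤ borderCols p k ∧
      ∀ a b : Fin k, t a b = p.bpix (i + (a : ℕ)) (j + (b : ℕ)) }

/-- The `k`-strictly-locally-testable language defined by the tile set `T`:
all pictures each of whose `k`-tiles (of the bordered picture) is in `T`. -/
def SLTLang {A : Type} (k : ℕ) (T : Set (BTile A k)) : Set (Picture A) :=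
  { p | tilesOf k p ⊆ T }

/-- The padded language `R^(k)` over `Σ ∪ {$}` (the padding symbol `$`
being `none`): each picture of `R` is extended with between 1 and `k`
columns of `$` on the right and between 1 and `k` rows of `$` at the
bottom, so that both sides of the result are multiples of `k`. -/
def padded {Sig : Type} (k : ℕ) (R : Set (Picture Sig)) :
    Set (Picture (Option Sig)) :=
  { q | ∃ p ∈ R,
      p.rows < q.rows ∧ q.rows ≤ p.rows + k ∧
      p.cols < q.cols ∧ q.cols ≤ p.cols + k ∧
      k ∣ q.rows ∧ k ∣ q.cols ∧
      ∀ i j : ℕ, i < q.rows → j < q.cols → q.pget i j = some (p.pget i j) }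

/-! `M` is the padded length of `m` iff `M` is the first multiple of `k` after `m`, and this can be
checked by counting modulo `k` along a line. The last column counts the rows, and below the content
every row counts the columns. To the right of the content stands a filler, so that the row just
below the content sees which columns lie beyond it, and the last column sees on its left which rows
do; there the counters must stay away from `0` until the end of the line. -/

/-- `M` is the length of a side of length `m` after padding: between `1` and `k` symbols are added,
reaching a multiple of `k`. -/
structure IsPaddedLength (k m M : ℕ) : Prop where
  lt : m < M
  le : M ≤ m + k
  dvd : k ∣ M

theorem isPaddedLength_iff {k m M : ℕ} [NeZero k] :
    IsPaddedLength k m M ↔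
      m < M ∧ (M : ZMod k) = 0 ∧ ∀ i, m < i → i < M → (i : ZMod k) ≠ 0 := by
  simp only [ne_eq, ZMod.natCast_eq_zero_iff]
  constructor
  · rintro ⟨hlt, hle, hdvd⟩
    refine ⟨hlt, hdvd, fun i hmi hiM hi => ?_⟩
    have hle_sub := Nat.le_of_dvd (by omega) (Nat.dvd_sub hdvd hi)
    omega
  · rintro ⟨hlt, hdvd, hfirst⟩
    refine ⟨hlt, ?_, hdvd⟩
    by_contra! hle
    have hmod := Nat.mod_lt m (NeZero.pos k)
    have hdiv := Nat.div_add_mod m k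
    exact hfirst (k * (m / k + 1)) (by rw [mul_add_one]; omega) (by rw [mul_add_one]; omega)
      (dvd_mul_right k _)

namespace Picture

variable {A B : Type}

theorem bpix_succ (p : Picture A) (i j : ℕ) : p.bpix (i + 1) (j + 1) = p.pget i j := by
  simp [bpix, pget]

theorem bpix_eq_none_iff {p : Picture A} {i j : ℕ} :
    p.bpix i j = none ↔ ¬ (1 ≤ i ∧ i ≤ p.rows ∧ 1 ≤ j ∧ j ≤ p.cols) := by
  simp only [bpix, dite_eq_right_iff, reduceCtorEq, imp_false]

theorem bpix_map (f : A → B) (p : Picture A) (i j : ℕ) :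
    (p.map f).bpix i j = (p.bpix i j).map f := by
  unfold bpix map
  split_ifs <;> rfl

theorem ext_bpix {p q : Picture A} (hrows : p.rows = q.rows) (hcols : p.cols = q.cols)
    (h : ∀ i j, 1 ≤ i ∧ i ≤ p.rows ∧ 1 ≤ j ∧ j ≤ p.cols → p.bpix i j = q.bpix i j) : p = q := by
  obtain ⟨m, n, hm, hn, s⟩ := p
  obtain ⟨m', n', hm', hn', t⟩ := q
  obtain rfl : m = m' := hrows
  obtain rfl : n = n' := hcols
  congr
  ext i j
  have hij := h (i + 1) (j + 1) (by grind)
  simpa only [bpix_succ, pget, i.2, j.2, and_self, dite_true, Option.some.injEq] using hij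

theorem exists_bpix_eq {m n : ℕ} (hm : 0 < m) (hn : 0 < n) {g : ℕ → ℕ → Option A}
    (hg : ∀ i j, g i j = none ↔ ¬ (1 ≤ i ∧ i ≤ m ∧ 1 ≤ j ∧ j ≤ n)) :
    ∃ p : Picture A, p.rows = m ∧ p.cols = n ∧ p.bpix = g := by
  have hsome (i : Fin m) (j : Fin n) : ∃ a, g (i + 1) (j + 1) = some a :=
    Option.ne_none_iff_exists'.1 fun h => (hg _ _).1 h (by omega)
  choose pix hpix using hsome
  refine ⟨⟨m, n, hm, hn, pix⟩, rfl, rfl, funext₂ fun i j => ?_⟩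
  by_cases h : 1 ≤ i ∧ i ≤ m ∧ 1 ≤ j ∧ j ≤ n
  · have hij := hpix ⟨i - 1, by omega⟩ ⟨j - 1, by omega⟩
    simp only [Nat.sub_add_cancel h.1, Nat.sub_add_cancel h.2.2.1] at hij
    rw [hij]
    exact dif_pos h
  · rw [(hg i j).2 h]
    exact dif_neg h

end Picture

theorem mem_SLTLang_two {A : Type} {T : Set (BTile A 2)} {p : Picture A} :
    p ∈ SLTLang 2 T ↔ ∀ i j, i ≤ p.rows → j ≤ p.cols →
      (fun a b : Fin 2 => p.bpix (i + a) (j + b)) ∈ T := by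
  simp only [SLTLang, tilesOf, borderRows, borderCols, Set.mem_ofPred_eq]
  constructor
  · intro h i j hi hj
    exact h ⟨i, j, by omega, by omega, fun _ _ => rfl⟩
  · rintro h t ⟨i, j, hi, hj, ht⟩
    rw [funext₂ ht]
    exact h i j (by omega) (by omega)

theorem mem_padded_iff {S : Type} {k : ℕ} {R : Set (Picture S)} {q : Picture (Option S)} :
    q ∈ padded k R ↔ ∃ p ∈ R, IsPaddedLength k p.rows q.rows ∧ IsPaddedLength k p.cols q.cols ∧
      ∀ i j, 1 ≤ i ∧ i ≤ q.rows ∧ 1 ≤ j ∧ j ≤ q.cols → q.bpix i j = some (p.bpix i j) := by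
  refine exists_congr fun p => and_congr_right fun _ => ⟨?_, ?_⟩
  · rintro ⟨hr, hr', hc, hc', hkr, hkc, hpix⟩
    refine ⟨⟨hr, hr', hkr⟩, ⟨hc, hc', hkc⟩, ?_⟩
    rintro (_ | i) (_ | j) ⟨hi, hi', hj, hj'⟩
    iterate 3 omega
    simpa only [Picture.bpix_succ] using hpix i j hi' hj'
  · rintro ⟨⟨hr, hr', hkr⟩, ⟨hc, hc', hkc⟩, hpix⟩
    refine ⟨hr, hr', hc, hc', hkr, hkc, fun i j hi hj => ?_⟩
    simpa only [Picture.bpix_succ] using hpix (i + 1) (j + 1) (by omega)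

/-- What the local rules see of a position of a bordered picture over the padded alphabet
`A ⊕ Option (ZMod k)`: the border, a letter of `A`, or a padding mark, which is either the filler
`none` or a counter modulo `k`. -/
inductive Cell (k : ℕ) : Type
  | border
  | content
  | pad (mark : Option (ZMod k))

namespace Cell

variable {k : ℕ}

/-- The padding mark that carries no information. -/
abbrev filler : Cell k := pad none

/-- The padding mark that counts modulo `k`. -/
abbrev counter (x : ZMod k) : Cell k := pad (some x)

/-- The value of a counter. The border has value `0`, so that counting starts from it; the values of
the other cells are junk. -/
def count : Cell k → ZMod k
  | pad (some x) => x
  | _ => 0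

/-- The cell of a pixel of a bordered picture over the padded alphabet. -/
def ofPixel {A : Type} : Option (A ⊕ Option (ZMod k)) → Cell k
  | none => border
  | some (Sum.inl _) => content
  | some (Sum.inr s) => pad s

theorem ofPixel_eq_border_iff {A : Type} {o : Option (A ⊕ Option (ZMod k))} :
    ofPixel o = border ↔ o = none := by
  rcases o with _ | _ | _ <;> simp [ofPixel]

theorem ofPixel_eq_content_iff {A : Type} {o : Option (A ⊕ Option (ZMod k))} :
    ofPixel o = content ↔ o.bind Sum.getLeft? ≠ none := by
  rcases o with _ | _ | _ <;> simp [ofPixel]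

end Cell

open Cell

/-- The local rules for the tile with upper row `a b` and lower row `c d` of a picture padded with
fillers and counters. The rule `counter_turn` ends the count of the columns, whose last value is
just before the last column. The rule `counter_beside` keeps the count of the rows away from `0`
until the end: below a `0` in the last column would stand a `1`, whereas in any other column all
counters are equal. -/
structure TileRules {k : ℕ} (a b c d : Cell k) : Prop where
  content_up_left : d = content → (b = content ∨ b = border) ∧ (c = content ∨ c = border)
  content_fill : b = content → c = content → d = content
  content_corner : a = border → b = border → c = border → d = content
  content_inner : a = content → b ≠ border ∧ c ≠ border
  last_column : b = border → d = border →
    c = counter (a.count + 1) ∨ c = border ∧ a.count = 0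
  first_row {x : ZMod k} : b = border → c = counter x → d = border
  filler_extend : b = filler → c = content ∨ c = filler → d = filler
  counter_below_content : b = content → d ≠ content → d = counter (c.count + 1)
  counter_below_filler {x : ZMod k} : b = filler → c = counter x →
    d = counter (x + 1) ∧ x + 1 ≠ 0
  counter_down {x : ZMod k} : a = counter x → c ≠ border → ∃ y, c = counter y
  counter_turn {x y : ZMod k} : a = content ∨ a = filler → b = counter y → c = counter x →
    x + 1 = 0
  counter_beside {x y : ZMod k} : a = counter x → b = counter 0 → d = counter y → y = 0

/-- The intended padding mark at position `(i, j)` when the content has `m` rows and the padded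
picture has `N` columns. -/
def padMark (k m N i j : ℕ) : Option (ZMod k) :=
  if j = N then some i else if i ≤ m then none else some j

/-- The intended cells of the bordered picture of size `(M, N)` that pads a content of size
`(m, n)`. -/
def layout (k m n M N i j : ℕ) : Cell k :=
  if 1 ≤ i ∧ i ≤ M ∧ 1 ≤ j ∧ j ≤ N then
    if i ≤ m ∧ j ≤ n then content else pad (padMark k m N i j)
  else border

section Layout

variable {k m n M N i j : ℕ}

theorem layout_eq_border_iff :
    layout k m n M N i j = border ↔ ¬ (1 ≤ i ∧ i ≤ M ∧ 1 ≤ j ∧ j ≤ N) := by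
  grind [layout]

theorem layout_eq_content_iff (hm : m < M) (hn : n < N) :
    layout k m n M N i j = content ↔ 1 ≤ i ∧ i ≤ m ∧ 1 ≤ j ∧ j ≤ n := by
  grind [layout]

theorem layout_eq_filler_iff (hm : m < M) :
    layout k m n M N i j = filler ↔ 1 ≤ i ∧ i ≤ m ∧ 1 ≤ j ∧ n < j ∧ j < N := by
  grind [layout, padMark]

theorem layout_eq_counter_iff (hn : n < N) {x : ZMod k} :
    layout k m n M N i j = counter x ↔ 1 ≤ i ∧ i ≤ M ∧ 1 ≤ j ∧
      (j = N ∧ (i : ZMod k) = x ∨ m < i ∧ j < N ∧ (j : ZMod k) = x) := by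
  grind (splits := 12) [layout, padMark]

theorem count_layout_last_column (hn : n < N) (hi : i ≤ M) :
    (layout k m n M N i N).count = i := by
  rcases i.eq_zero_or_pos with rfl | hi0
  · simp [layout, count]
  · rw [(layout_eq_counter_iff hn).2 ⟨hi0, hi, by omega, .inl ⟨rfl, rfl⟩⟩, count]

theorem count_layout_below (hn : n < N) (hmi : m < i) (hi : i ≤ M) (hj : j < N) :
    (layout k m n M N i j).count = j := by
  rcases j.eq_zero_or_pos with rfl | hj0
  · simp [layout, count]
  · rw [(layout_eq_counter_iff hn).2 ⟨by omega, hi, hj0, .inr ⟨hmi, hj, rfl⟩⟩, count]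

theorem layout_tileRules [NeZero k] (hm : 0 < m) (hn : 0 < n) (hM : IsPaddedLength k m M)
    (hN : IsPaddedLength k n N) (hi : i ≤ M) (hj : j ≤ N) :
    TileRules (layout k m n M N i j) (layout k m n M N i (j + 1))
      (layout k m n M N (i + 1) j) (layout k m n M N (i + 1) (j + 1)) := by
  obtain ⟨hmM, hM0, hMne⟩ := isPaddedLength_iff.1 hM
  obtain ⟨hnN, hN0, hNne⟩ := isPaddedLength_iff.1 hN
  constructor <;>
    simp only [layout_eq_border_iff, layout_eq_content_iff hmM hnN, layout_eq_filler_iff hmM,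
      layout_eq_counter_iff hnN, ne_eq, not_not]
  case last_column =>
    intro hb hd
    obtain rfl : j = N := by omega
    rw [count_layout_last_column hnN hi]
    rcases hi.lt_or_eq with hi | rfl
    · exact .inl ⟨by omega, by omega, by omega, .inl ⟨rfl, Nat.cast_succ i⟩⟩
    · exact .inr ⟨by omega, hM0⟩
  case counter_below_content =>
    intro hb hd
    rw [count_layout_below hnN (by omega) (by omega) (by omega)]
    exact ⟨by omega, by omega, by omega, .inr ⟨by omega, by omega, Nat.cast_succ j⟩⟩
  case counter_below_filler =>
    rintro x hb ⟨-, hiM, hj0, ⟨rfl, -⟩ | ⟨hmi, -, rfl⟩⟩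
    · omega
    · rw [← Nat.cast_succ]
      exact ⟨⟨by omega, hiM, by omega, .inr ⟨hmi, by omega, rfl⟩⟩,
        hNne _ (by omega) (by omega)⟩
  case counter_down =>
    rintro x ⟨-, -, hj0, ⟨rfl, -⟩ | ⟨hmi, hjN, -⟩⟩ hc
    · exact ⟨_, by omega, by omega, hj0, .inl ⟨rfl, rfl⟩⟩
    · exact ⟨_, by omega, by omega, hj0, .inr ⟨by omega, hjN, rfl⟩⟩
  case counter_turn =>
    rintro x y ha ⟨-, -, -, hb⟩ ⟨-, -, -, hc⟩
    have hj : j + 1 = N := by omega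
    obtain ⟨-, -, rfl⟩ := hc.resolve_left (by omega)
    rw [← Nat.cast_add_one, hj, hN0]
  case counter_beside =>
    rintro x y ⟨-, -, -, ha⟩ ⟨-, -, -, hb⟩ ⟨-, hiM, -, hd⟩
    rcases hb with ⟨_, hi0⟩ | ⟨_, _, hj0⟩
    · exact absurd hi0 (hMne i (by omega) hiM)
    · obtain ⟨-, -, rfl⟩ := hd.resolve_left (by omega)
      exact hj0
  all_goals grind

end Layout

/-- `f` gives the cells of a bordered picture of size `(M, N)` whose tiles obey the local rules. -/
structure IsGrid {k : ℕ} (M N : ℕ) (f : ℕ → ℕ → Cell k) : Prop where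
  rows_pos : 0 < M
  cols_pos : 0 < N
  border_iff : ∀ i j, f i j = border ↔ ¬ (1 ≤ i ∧ i ≤ M ∧ 1 ≤ j ∧ j ≤ N)
  tileRules : ∀ i j, i ≤ M → j ≤ N →
    TileRules (f i j) (f i (j + 1)) (f (i + 1) j) (f (i + 1) (j + 1))

/-- A grid whose content is the rectangle of size `(m, n)` in its upper left corner. -/
structure IsPaddedGrid {k : ℕ} (m n M N : ℕ) (f : ℕ → ℕ → Cell k) : Prop extends
    IsGrid M N f where
  content_rows_pos : 0 < m
  content_cols_pos : 0 < n
  content_rows_lt : m < M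
  content_cols_lt : n < N
  content_iff : ∀ i j, f i j = content ↔ 1 ≤ i ∧ i ≤ m ∧ 1 ≤ j ∧ j ≤ n

theorem exists_forall_iff_lt {P : ℕ → Prop} {M : ℕ} (hP : ∀ i, P (i + 1) → P i) (hM : ¬ P M) :
    ∃ m ≤ M, ∀ i, P i ↔ i < m := by
  classical
  have hex : ∃ i, ¬ P i := ⟨M, hM⟩
  refine ⟨Nat.find hex, Nat.find_min' hex hM, fun i => ?_⟩
  simp only [Nat.lt_find_iff, not_not]
  exact ⟨fun hi j hji => Nat.decreasingInduction (fun l _ => hP l) hi hji, fun h => h i le_rfl⟩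

theorem exists_forall_iff_lt_and_lt {P : ℕ → ℕ → Prop} {M N : ℕ}
    (hup : ∀ i j, P (i + 1) j → P i j) (hleft : ∀ i j, P i (j + 1) → P i j)
    (hfill : ∀ i j, P i (j + 1) → P (i + 1) j → P (i + 1) (j + 1))
    (hM : ¬ P M 0) (hN : ¬ P 0 N) :
    ∃ m ≤ M, ∃ n ≤ N, ∀ i j, P i j ↔ i < m ∧ j < n := by
  obtain ⟨m, hmM, hm⟩ := exists_forall_iff_lt (P := (P · 0)) (hup · 0) hM
  obtain ⟨n, hnN, hn⟩ := exists_forall_iff_lt (P := P 0) (hleft 0) hN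
  refine ⟨m, hmM, n, hnN, fun i j => ?_⟩
  rw [← hm, ← hn]
  induction i generalizing j with
  | zero =>
    exact ⟨fun h => ⟨Nat.decreasingInduction (motive := fun l _ => P 0 l) (fun l _ => hleft 0 l) h
      j.zero_le, h⟩, And.right⟩
  | succ i ihi =>
    induction j with
    | zero => exact ⟨fun h => ⟨h, ((ihi 0).1 (hup i 0 h)).2⟩, And.left⟩
    | succ j ihj =>
      constructor
      · intro h
        exact ⟨(ihj.1 (hleft _ _ h)).1, ((ihi _).1 (hup _ _ h)).2⟩
      · rintro ⟨hi, hj⟩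
        exact hfill i j ((ihi _).2 ⟨hup _ _ hi, hj⟩) (ihj.2 ⟨hi, hleft _ _ hj⟩)

namespace IsGrid

variable {k M N : ℕ} {f : ℕ → ℕ → Cell k}

theorem eq_border (h : IsGrid M N f) {i j : ℕ} (hij : ¬ (1 ≤ i ∧ i ≤ M ∧ 1 ≤ j ∧ j ≤ N)) :
    f i j = border :=
  (h.border_iff i j).2 hij

theorem ne_border (h : IsGrid M N f) {i j : ℕ} (hij : 1 ≤ i ∧ i ≤ M ∧ 1 ≤ j ∧ j ≤ N) :
    f i j ≠ border :=
  fun hf => (h.border_iff i j).1 hf hij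

theorem lt_of_eq_content (h : IsGrid M N f) {i j : ℕ} (hij : f i j = content) :
    1 ≤ i ∧ i < M ∧ 1 ≤ j ∧ j < N := by
  have hin : 1 ≤ i ∧ i ≤ M ∧ 1 ≤ j ∧ j ≤ N :=
    not_not.1 fun hout => by simpa [hij] using h.eq_border hout
  obtain ⟨hb, hc⟩ := (h.tileRules i j (by omega) (by omega)).content_inner hij
  rw [ne_eq, h.border_iff, not_not] at hb hc
  omega

theorem exists_isPaddedGrid (h : IsGrid M N f) : ∃ m n, IsPaddedGrid m n M N f := by
  have hcorner : f 1 1 = content :=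
    (h.tileRules 0 0 (by omega) (by omega)).content_corner (h.eq_border (by omega))
      (h.eq_border (by omega)) (h.eq_border (by omega))
  obtain ⟨m, hmM, n, hnN, hmn⟩ := exists_forall_iff_lt_and_lt
      (P := fun i j => f (i + 1) (j + 1) = content) (M := M - 1) (N := N - 1)
    (fun i j hij => by
      have hlt := h.lt_of_eq_content hij
      exact ((h.tileRules _ _ (by omega) (by omega)).content_up_left hij).1.resolve_right
        (h.ne_border (by omega)))
    (fun i j hij => by
      have hlt := h.lt_of_eq_content hij
      exact ((h.tileRules _ _ (by omega) (by omega)).content_up_left hij).2.resolve_right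
        (h.ne_border (by omega)))
    (fun i j hb hc => by
      have hltb := h.lt_of_eq_content hb
      have hltc := h.lt_of_eq_content hc
      exact (h.tileRules _ _ (by omega) (by omega)).content_fill hb hc)
    (fun hij => by have := h.lt_of_eq_content hij; omega)
    (fun hij => by have := h.lt_of_eq_content hij; omega)
  obtain ⟨hm, hn⟩ := (hmn 0 0).1 hcorner
  refine ⟨m, n, h, hm, hn, by omega, by omega, fun i j => ⟨fun hij => ?_, ?_⟩⟩
  · have hlt := h.lt_of_eq_content hij
    have hin : i - 1 < m ∧ j - 1 < n := (hmn _ _).1 <| by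
      rwa [Nat.sub_add_cancel hlt.1, Nat.sub_add_cancel hlt.2.2.1]
    omega
  · rintro ⟨hi, him, hj, hjn⟩
    simpa only [Nat.sub_add_cancel hi, Nat.sub_add_cancel hj] using
      (hmn (i - 1) (j - 1)).2 (by omega)

theorem last_column (h : IsGrid M N f) {i : ℕ} (hi : 1 ≤ i) (hiM : i ≤ M) :
    f i N = counter i := by
  have hN := h.cols_pos
  have hnext {i : ℕ} (hi : i < M) : f (i + 1) N = counter ((f i N).count + 1) :=
    ((h.tileRules i N hi.le le_rfl).last_column (h.eq_border (by omega))
      (h.eq_border (by omega))).resolve_right fun hc => h.ne_border (by omega) hc.1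
  induction i, hi using Nat.le_induction with
  | base => simp [hnext hiM, h.eq_border (i := 0) (by omega), count]
  | succ i _ ih => rw [hnext hiM, ih (by omega), count, Nat.cast_succ]

theorem natCast_rows (h : IsGrid M N f) : (M : ZMod k) = 0 := by
  rcases (h.tileRules M N le_rfl le_rfl).last_column (h.eq_border (by omega))
    (h.eq_border (by omega)) with hc | ⟨-, hc⟩
  · exact absurd (hc.symm.trans (h.eq_border (by omega))) (by simp)
  · rwa [h.last_column h.rows_pos le_rfl] at hc

end IsGrid

namespace IsPaddedGrid

variable {k m n M N : ℕ} {f : ℕ → ℕ → Cell k}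

theorem content_or_filler (h : IsPaddedGrid m n M N f) {i j : ℕ} (hi : 1 ≤ i) (him : i ≤ m)
    (hj : 1 ≤ j) (hjN : j < N) : f i j = content ∨ f i j = filler := by
  have hmM := h.content_rows_lt
  have hn := h.content_cols_pos
  induction i, hi using Nat.le_induction generalizing j with
  | base =>
    rcases hf : f 1 j with _ | _ | _ | x
    · exact absurd hf (h.ne_border (by omega))
    · exact .inl rfl
    · exact .inr rfl
    · exact absurd ((h.tileRules 0 j (by omega) hjN.le).first_row (h.eq_border (by omega)) hf)
        (h.ne_border (by omega))
  | succ i hi ihi =>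
    induction j, hj using Nat.le_induction with
    | base => exact .inl ((h.content_iff _ _).2 (by omega))
    | succ j hj ihj =>
      rcases ihi (by omega) (by omega) hjN with hb | hb
      · have hin := (h.content_iff _ _).1 hb
        exact .inl ((h.content_iff _ _).2 (by omega))
      · exact .inr ((h.tileRules i j (by omega) (by omega)).filler_extend hb (ihj (by omega)))

theorem filler_right (h : IsPaddedGrid m n M N f) {i j : ℕ} (hi : 1 ≤ i) (him : i ≤ m)
    (hj : n < j) (hjN : j < N) : f i j = filler := by
  refine (h.content_or_filler hi him (by omega) hjN).resolve_left fun hf => ?_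
  have hin := (h.content_iff _ _).1 hf
  omega

theorem row_below (h : IsPaddedGrid m n M N f) {j : ℕ} (hj : 1 ≤ j) (hjN : j < N) :
    f (m + 1) j = counter j := by
  have hm := h.content_rows_pos
  have hn := h.content_cols_pos
  have hmM := h.content_rows_lt
  have hcontent {j : ℕ} (hj : j < n) :
      f (m + 1) (j + 1) = counter ((f (m + 1) j).count + 1) := by
    have hnN := h.content_cols_lt
    refine (h.tileRules m j (by omega) (by omega)).counter_below_content
      ((h.content_iff _ _).2 (by omega)) fun hd => ?_
    have hin := (h.content_iff _ _).1 hd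
    omega
  induction j, hj using Nat.le_induction with
  | base => simp [hcontent hn, h.eq_border (j := 0) (by omega), count]
  | succ j _ ih =>
    rw [Nat.cast_succ]
    by_cases hjn : j < n
    · rw [hcontent hjn, ih (by omega), count]
    · exact ((h.tileRules m j (by omega) (by omega)).counter_below_filler
        (h.filler_right hm le_rfl (by omega) hjN) (ih (by omega))).1

theorem natCast_ne_zero_of_col (h : IsPaddedGrid m n M N f) {j : ℕ} (hj : n < j) (hjN : j < N) :
    (j : ZMod k) ≠ 0 := by
  have hn := h.content_cols_pos
  obtain ⟨j, rfl⟩ := Nat.exists_eq_add_one.2 (hn.trans hj)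
  rw [Nat.cast_succ]
  exact ((h.tileRules m j h.content_rows_lt.le (by omega)).counter_below_filler
    (h.filler_right h.content_rows_pos le_rfl hj hjN) (h.row_below (by omega) (by omega))).2

theorem natCast_cols (h : IsPaddedGrid m n M N f) : (N : ZMod k) = 0 := by
  have hm := h.content_rows_pos
  have hn := h.content_cols_pos
  have hmM := h.content_rows_lt
  have hnN := h.content_cols_lt
  obtain ⟨j, rfl⟩ := Nat.exists_eq_add_one.2 h.cols_pos
  rw [Nat.cast_succ]
  exact (h.tileRules m j hmM.le (by omega)).counter_turn
    (h.content_or_filler hm le_rfl (by omega) (by omega)) (h.last_column hm hmM.le)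
    (h.row_below (by omega) (by omega))

theorem counter_below (h : IsPaddedGrid m n M N f) {i j : ℕ} (hmi : m < i) (hiM : i ≤ M)
    (hj : 1 ≤ j) (hjN : j < N) : ∃ x, f i j = counter x := by
  induction i, hmi using Nat.le_induction with
  | base => exact ⟨j, h.row_below hj hjN⟩
  | succ i _ ih =>
    obtain ⟨x, hx⟩ := ih (by omega)
    exact (h.tileRules i j (by omega) hjN.le).counter_down hx (h.ne_border (by omega))

theorem natCast_ne_zero_of_row [Nontrivial (ZMod k)] (h : IsPaddedGrid m n M N f) {i : ℕ}
    (hi : m < i) (hiM : i < M) : (i : ZMod k) ≠ 0 := by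
  have hn := h.content_cols_pos
  have hnN := h.content_cols_lt
  obtain ⟨j, rfl⟩ := Nat.exists_eq_add_one.2 h.cols_pos
  intro hi0
  obtain ⟨x, hx⟩ := h.counter_below hi hiM.le (j := j) (by omega) (by omega)
  have hb : f i (j + 1) = counter 0 := hi0 ▸ h.last_column (by omega) hiM.le
  have hd := h.last_column (i := i + 1) (by omega) hiM
  simpa [hi0] using (h.tileRules i j hiM.le (by omega)).counter_beside hx hb hd

theorem isPaddedLength_rows [Fact (1 < k)] (h : IsPaddedGrid m n M N f) :
    IsPaddedLength k m M :=
  have : NeZero k := NeZero.of_gt (Fact.out : 1 < k)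
  isPaddedLength_iff.2
    ⟨h.content_rows_lt, h.natCast_rows, fun _ hi hiM => h.natCast_ne_zero_of_row hi hiM⟩

theorem isPaddedLength_cols [NeZero k] (h : IsPaddedGrid m n M N f) : IsPaddedLength k n N :=
  isPaddedLength_iff.2
    ⟨h.content_cols_lt, h.natCast_cols, fun _ hj hjN => h.natCast_ne_zero_of_col hj hjN⟩

end IsPaddedGrid

section Recognition

variable {A S : Type}

/-- The tiles over the padded alphabet that obey the local rules and carry a tile of `T` wherever
they meet the content. -/
def padTiles (k : ℕ) (T : Set (BTile A 2)) : Set (BTile (A ⊕ Option (ZMod k)) 2) :=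
  { t | TileRules (ofPixel (t 0 0)) (ofPixel (t 0 1)) (ofPixel (t 1 0)) (ofPixel (t 1 1)) ∧
    ((∃ a b, ofPixel (t a b) = content) → (fun a b => (t a b).bind Sum.getLeft?) ∈ T) }

/-- The projection of the padded alphabet that applies `f` to the letters and turns every padding
mark into the padding symbol `none`. -/
def padProj {k : ℕ} (f : A → S) (x : A ⊕ Option (ZMod k)) : Option S :=
  x.getLeft?.map f

/-- The pixels of the bordered picture of size `(M, N)` that pads `p` with its intended marks. -/
def padPixel (k : ℕ) (p : Picture A) (M N i j : ℕ) : Option (A ⊕ Option (ZMod k)) :=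
  if 1 ≤ i ∧ i ≤ M ∧ 1 ≤ j ∧ j ≤ N then
    some ((p.bpix i j).elim (.inr (padMark k p.rows N i j)) .inl)
  else none

theorem bpix_map_padProj {k : ℕ} {f : A → S} {r : Picture (A ⊕ Option (ZMod k))} {i j : ℕ}
    (hij : 1 ≤ i ∧ i ≤ r.rows ∧ 1 ≤ j ∧ j ≤ r.cols) :
    (r.map (padProj f)).bpix i j = some (((r.bpix i j).bind Sum.getLeft?).map f) := by
  obtain ⟨x, hx⟩ := Option.ne_none_iff_exists'.1 (mt Picture.bpix_eq_none_iff.1 (not_not.2 hij))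
  rw [Picture.bpix_map, hx]
  rfl

theorem padPixel_eq_none_iff {k : ℕ} {p : Picture A} {M N i j : ℕ} :
    padPixel k p M N i j = none ↔ ¬ (1 ≤ i ∧ i ≤ M ∧ 1 ≤ j ∧ j ≤ N) := by
  simp only [padPixel, ite_eq_right_iff, reduceCtorEq, imp_false]

theorem getLeft?_padPixel {k : ℕ} {p : Picture A} {M N : ℕ} (hM : p.rows < M) (hN : p.cols < N)
    (i j : ℕ) : (padPixel k p M N i j).bind Sum.getLeft? = p.bpix i j := by
  unfold padPixel
  split_ifs with h
  · cases p.bpix i j <;> rfl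
  · exact (Picture.bpix_eq_none_iff.2 (by omega)).symm

theorem ofPixel_padPixel {k : ℕ} {p : Picture A} {M N : ℕ} (i j : ℕ) :
    ofPixel (padPixel k p M N i j) = layout k p.rows p.cols M N i j := by
  unfold padPixel layout
  split_ifs with hin hcontent
  · obtain ⟨a, ha⟩ := Option.ne_none_iff_exists'.1
      (mt Picture.bpix_eq_none_iff.1 (not_not.2 ⟨hin.1, hcontent.1, hin.2.2.1, hcontent.2⟩))
    rw [ha]
    rfl
  · rw [Picture.bpix_eq_none_iff.2 (by omega)]
    rfl
  · rfl

variable {k : ℕ} {T : Set (BTile A 2)}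

theorem exists_mem_SLTLang_padTiles [NeZero k] {p : Picture A} (hp : p ∈ SLTLang 2 T) {M N : ℕ}
    (hM : IsPaddedLength k p.rows M) (hN : IsPaddedLength k p.cols N) :
    ∃ r ∈ SLTLang 2 (padTiles k T), r.rows = M ∧ r.cols = N ∧
      ∀ i j, (r.bpix i j).bind Sum.getLeft? = p.bpix i j := by
  obtain ⟨r, hrM, hrN, hr⟩ := Picture.exists_bpix_eq (p.rows_pos.trans hM.lt)
    (p.cols_pos.trans hN.lt) fun i j => padPixel_eq_none_iff (k := k) (p := p)
  refine ⟨r, mem_SLTLang_two.2 fun i j hi hj => ?_, hrM, hrN,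
    fun i j => hr ▸ getLeft?_padPixel hM.lt hN.lt i j⟩
  simp only [hr, padTiles, Set.mem_ofPred_eq, ofPixel_padPixel, getLeft?_padPixel hM.lt hN.lt]
  refine ⟨layout_tileRules p.rows_pos p.cols_pos hM hN (hrM ▸ hi) (hrN ▸ hj), ?_⟩
  rintro ⟨a, b, hab⟩
  rw [layout_eq_content_iff hM.lt hN.lt] at hab
  exact mem_SLTLang_two.1 hp i j (by omega) (by omega)

theorem isGrid_of_mem_SLTLang_padTiles {r : Picture (A ⊕ Option (ZMod k))}
    (hr : r ∈ SLTLang 2 (padTiles k T)) :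
    IsGrid r.rows r.cols fun i j => ofPixel (r.bpix i j) where
  rows_pos := r.rows_pos
  cols_pos := r.cols_pos
  border_iff _ _ := ofPixel_eq_border_iff.trans Picture.bpix_eq_none_iff
  tileRules i j hi hj := (mem_SLTLang_two.1 hr i j hi hj).1

theorem exists_mem_SLTLang_of_padTiles [Fact (1 < k)] {r : Picture (A ⊕ Option (ZMod k))}
    (hr : r ∈ SLTLang 2 (padTiles k T)) :
    ∃ p ∈ SLTLang 2 T, IsPaddedLength k p.rows r.rows ∧ IsPaddedLength k p.cols r.cols ∧
      ∀ i j, (r.bpix i j).bind Sum.getLeft? = p.bpix i j := by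
  have : NeZero k := NeZero.of_gt (Fact.out : 1 < k)
  obtain ⟨m, n, h⟩ := (isGrid_of_mem_SLTLang_padTiles hr).exists_isPaddedGrid
  obtain ⟨p, rfl, rfl, hp⟩ := Picture.exists_bpix_eq h.content_rows_pos h.content_cols_pos
    fun i j => (not_iff_comm.1 (ofPixel_eq_content_iff.symm.trans (h.content_iff i j))).symm
  refine ⟨p, mem_SLTLang_two.2 fun i j hi hj => ?_, h.isPaddedLength_rows,
    h.isPaddedLength_cols, fun i j => (congr_fun₂ hp i j).symm⟩
  have hmeets : ∃ a b : Fin 2, ofPixel (r.bpix (i + a) (j + b)) = content := by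
    have hm := p.rows_pos
    have hn := p.cols_pos
    refine ⟨⟨1 - i, by omega⟩, ⟨1 - j, by omega⟩, (h.content_iff _ _).2 ?_⟩
    dsimp only
    omega
  rw [hp]
  exact (mem_SLTLang_two.1 hr i j (hi.trans h.content_rows_lt.le)
    (hj.trans h.content_cols_lt.le)).2 hmeets

theorem padded_tiling_system_size_general (hk : 1 < k) (T : Set (BTile A 2)) (f : A → S) :
    padded k (Picture.map f '' SLTLang 2 T) =
      Picture.map (padProj f) '' SLTLang 2 (padTiles k T) := by
  have : Fact (1 < k) := ⟨hk⟩
  have : NeZero k := NeZero.of_gt hk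
  ext q
  rw [mem_padded_iff, Set.exists_mem_image]
  constructor
  · rintro ⟨p, hp, hM, hN, hq⟩
    obtain ⟨r, hr, hrM, hrN, hr_content⟩ := exists_mem_SLTLang_padTiles hp hM hN
    refine ⟨r, hr, Picture.ext_bpix hrM hrN fun i j hij => ?_⟩
    rw [bpix_map_padProj hij, hr_content, hq i j (hrM ▸ hrN ▸ hij), Picture.bpix_map]
  · rintro ⟨r, hr, rfl⟩
    obtain ⟨p, hp, hM, hN, hr_content⟩ := exists_mem_SLTLang_of_padTiles hr
    refine ⟨p, hp, hM, hN, fun i j hij => ?_⟩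
    rw [bpix_map_padProj hij, hr_content, Picture.bpix_map]

end Recognition

/-- If `R ⊆ Σ^{++}` is recognized by a tiling system with local alphabet
`Γ'`, then for every `k ≥ 2` the padded language `R^(k)` is recognized by a
tiling system whose local alphabet has cardinality `|Γ'| + k + 1`. -/
theorem padded_tiling_system_size :
    ∀ (Sig : Type) (_ : Fintype Sig) (R : Set (Picture Sig))
      (Gam' : Type) (_ : Fintype Gam') (T' : Set (BTile Gam' 2)) (π' : Gam' → Sig),
      R = Picture.map π' '' SLTLang 2 T' →
      ∀ k : ℕ, 2 ≤ k →
        ∃ (Gam : Type) (_ : Fintype Gam),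
          Fintype.card Gam = Fintype.card Gam' + k + 1 ∧
          ∃ (T : Set (BTile Gam 2)) (π : Gam → Option Sig),
            padded k R = Picture.map π '' SLTLang 2 T := by
  rintro Sig _ R Gam' _ T' π' rfl k hk
  have : NeZero k := NeZero.of_gt hk
  exact ⟨Gam' ⊕ Option (ZMod k), inferInstance, by simp [ZMod.card, add_assoc], padTiles k T',
    padProj π', padded_tiling_system_size_general hk T' π'⟩
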